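/- arXiv:0911.3038 — 9 statements merged into one kernel-verified Lean document; each statement's English description precedes it below -/
import Mathlib

section
/- For every base b ≥ 2, there are only finitely many Munchausen numbers in base b; that is, the set {n ∈ ℕ : n = P_b(n)} is finite. -/
/-- Digit power sum: `P b n = Σ cᵢ^cᵢ` over the base-`b` digits of `n`, with `0^0 = 1`. -/
def P (b n : ℕ) : ℕ := ((Nat.digits b n).map (fun c => c ^ c)).sum

theorem munchausen_finite (b : ℕ) (hb : 2 ≤ b) :
    {n : ℕ | n = P b n}.Finite := by
  apply (Set.finite_lt_nat (b ^ (2 * b + 3))).subset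
  intro n hn
  simp only [Set.mem_ofPred_eq] at hn ⊢
  by_contra hlt
  push Not at hlt
  have hsum : P b n ≤ (Nat.digits b n).length * b ^ b := by
    unfold P
    have h := List.sum_le_card_nsmul ((Nat.digits b n).map (fun c => c ^ c)) (b ^ b) (by
      intro x hx
      obtain ⟨c, hc, rfl⟩ := List.mem_map.1 hx
      have hcb : c < b := Nat.digits_lt_base (by omega) hc
      exact (Nat.pow_le_pow_left hcb.le c).trans (Nat.pow_le_pow_right (by omega) hcb.le))
    simpa using h
  have hn0 : n ≠ 0 := by
    have : 0 < b ^ (2 * b + 3) := by positivity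
    omega
  have hk : 2 * b + 3 < (Nat.digits b n).length :=
    (Nat.lt_digits_length_iff (by omega) n).2 hlt
  have hlow : b ^ (Nat.digits b n).length ≤ b * n := Nat.base_pow_length_digits_le b n (by omega) hn0
  generalize (Nat.digits b n).length = k at *
  obtain ⟨j, rfl⟩ : ∃ j, k = b + 1 + (j + 1) := ⟨k - b - 2, by omega⟩
  have h1 : b * b ^ b * b ^ (j + 1) ≤ b * b ^ b * (b + 1 + (j + 1)) := by
    calc b * b ^ b * b ^ (j + 1) = b ^ (b + 1 + (j + 1)) := by ring
      _ ≤ b * n := hlow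
      _ ≤ b * ((b + 1 + (j + 1)) * b ^ b) := Nat.mul_le_mul_left _ (hn.le.trans hsum)
      _ = _ := by ring
  have h2 : b ^ (j + 1) ≤ b + 1 + (j + 1) := Nat.le_of_mul_le_mul_left h1 (by positivity)
  have h3 : 2 ^ (j + 1) ≤ b ^ (j + 1) := Nat.pow_le_pow_left hb _
  have h4 : j < 2 ^ j := Nat.lt_two_pow_self
  rw [pow_succ] at h3
  omega
end

section
/- For every base b ≥ 2, every Munchausen number n in base b satisfies n ≤ 2·b^b. -/
/-- Growth bound: `(b+1+k)(b-1)^(b-1) < b^(b+k)` with `b = a + 2`. -/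
theorem munch_key (a k : ℕ) : (a + 3 + k) * (a + 1) ^ (a + 1) < (a + 2) ^ (a + 2 + k) := by
  induction k with
  | zero =>
    have h : (a + 1) ^ a ≤ (a + 2) ^ a := Nat.pow_le_pow_left (by omega) a
    have hp : 0 < (a + 2) ^ a := by positivity
    calc (a + 3 + 0) * (a + 1) ^ (a + 1) = (a + 3) * (a + 1) * (a + 1) ^ a := by ring
      _ ≤ (a + 3) * (a + 1) * (a + 2) ^ a := Nat.mul_le_mul_left _ h
      _ < (a + 2) ^ 2 * (a + 2) ^ a := Nat.mul_lt_mul_of_pos_right (by nlinarith) hp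
      _ = (a + 2) ^ (a + 2 + 0) := by ring
  | succ k ih =>
    calc (a + 3 + (k + 1)) * (a + 1) ^ (a + 1)
        ≤ ((a + 2) * (a + 3 + k)) * (a + 1) ^ (a + 1) :=
          Nat.mul_le_mul_right _ (by nlinarith)
      _ = (a + 2) * ((a + 3 + k) * (a + 1) ^ (a + 1)) := by ring
      _ < (a + 2) * (a + 2) ^ (a + 2 + k) := Nat.mul_lt_mul_of_pos_left ih (by omega)
      _ = (a + 2) ^ (a + 2 + (k + 1)) := by ring

theorem munchausen_le (b n : ℕ) (hb : 2 ≤ b) (hn : n = P b n) :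
    n ≤ 2 * b ^ b := by
  obtain ⟨a, rfl⟩ : ∃ a, b = a + 2 := ⟨b - 2, by omega⟩
  have hlt : n < (a + 2) ^ (Nat.digits (a + 2) n).length :=
    Nat.lt_base_pow_length_digits (by omega)
  rcases Nat.lt_or_ge (a + 2) (Nat.digits (a + 2) n).length with h | h
  · exfalso
    obtain ⟨k, hk⟩ : ∃ k, (Nat.digits (a + 2) n).length = a + 3 + k := ⟨_, by
      exact (Nat.add_sub_of_le h).symm⟩
    have hn0 : n ≠ 0 := by
      rintro rfl
      simp at h
    have h1 := Nat.base_pow_length_digits_le (a + 2) n (by omega) hn0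
    have h2 : P (a + 2) n ≤ (a + 3 + k) * (a + 1) ^ (a + 1) := by
      have := List.sum_le_card_nsmul ((Nat.digits (a + 2) n).map (fun c => c ^ c))
        ((a + 1) ^ (a + 1)) (by
          intro x hx
          obtain ⟨c, hc, rfl⟩ := List.mem_map.1 hx
          have hc' := Nat.digits_lt_base (by omega : 1 < a + 2) hc
          exact (Nat.pow_le_pow_left (by omega : c ≤ a + 1) c).trans
            (Nat.pow_le_pow_right (by omega) (by omega)))
      simpa [P, hk] using this
    have h3 := munch_key a k
    rw [hk, show a + 3 + k = (a + 2 + k) + 1 by ring, pow_succ, mul_comm] at h1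
    have h4 := Nat.le_of_mul_le_mul_left h1 (by omega)
    omega
  · have := Nat.pow_le_pow_right (by omega : 0 < a + 2) h
    omega
end

section
/- For every base b ≥ 2 and every natural number n > 2·b^b, one has n > P_b(n); in particular no n > 2·b^b is a Munchausen number in base b. -/
theorem gt_digit_power_sum (b n : ℕ) (hb : 2 ≤ b) (hn : n > 2 * b ^ b) :
    n > P b n := by
  have h1 : P b n ≤ (Nat.digits b n).length * b ^ (b - 1) := by
    unfold P
    have h := List.sum_le_card_nsmul ((Nat.digits b n).map (fun c => c ^ c)) (b ^ (b - 1)) (by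
      intro x hx
      obtain ⟨c, hc, rfl⟩ := List.mem_map.1 hx
      have hcb : c < b := Nat.digits_lt_base hb hc
      calc c ^ c ≤ b ^ c := Nat.pow_le_pow_left hcb.le c
        _ ≤ b ^ (b - 1) := Nat.pow_le_pow_right (by omega) (by omega))
    simpa using h
  have h2 : b ^ (Nat.digits b n).length ≤ b * n := 
    Nat.base_pow_length_digits_le b n hb (by omega)
  generalize (Nat.digits b n).length = L at h1 h2
  have hbb : b ^ b = b * b ^ (b - 1) := by
    rw [← pow_succ']; congr 1; omega
  rcases Nat.lt_or_ge (2 * b) L with hL | hL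
  · obtain ⟨k, rfl⟩ : ∃ k, L = b + (k + 1) := ⟨L - b - 1, by omega⟩
    have hk : k + 1 ≤ b ^ k := Nat.lt_pow_self (by omega)
    have e : b ^ (b + (k + 1)) = b * (b * b ^ k * b ^ (b - 1)) := by
      rw [pow_add, hbb, pow_succ]; ring
    rw [e] at h2
    have h3 := Nat.le_of_mul_le_mul_left h2 (by omega)
    have h4 : b + (k + 1) < b * b ^ k := by
      have : b * (k + 1) ≤ b * b ^ k := Nat.mul_le_mul_left _ hk
      nlinarith
    have hp : 0 < b ^ (b - 1) := by positivity
    have := Nat.mul_lt_mul_of_pos_right h4 hp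
    omega
  · have := Nat.mul_le_mul_right (b ^ (b - 1)) hL
    rw [hbb] at hn
    nlinarith
end

section
/- The positive Munchausen numbers in base 10 are exactly 1 and 3435; that is, for n ≥ 1, n = P_10(n) if and only if n = 1 or n = 3435. -/
/-- An additive code for digits, congruent to the digit mod 9. -/
def ecode (d : ℕ) : ℕ := 9 * 16 ^ d + d

/-- Sum of the codes of the (at most `f`) digits of a number. -/
def encode (f : ℕ) : ℕ → ℕ :=
  Nat.rec (fun _ => 0)
    (fun _ ih s => cond (Nat.beq s 0) 0 (Nat.add (ecode (Nat.mod s 10)) (ih (Nat.div s 10)))) f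

theorem encode_succ (f s : ℕ) :
    encode (f + 1) s = cond (Nat.beq s 0) 0 (ecode (s % 10) + encode f (s / 10)) := rfl

/-- Test at a leaf of the search. -/
def leafOk (s e : ℕ) : Bool :=
  cond (Nat.beq (encode 10 s) e) (Nat.ble s 1 || Nat.beq s 3435) true

/-- Choose how often a digit with weight `w` and code `c` occurs. -/
noncomputable def loopOk (w c : ℕ) (next : ℕ → ℕ → ℕ → Bool) (r : ℕ) : ℕ → ℕ → Bool :=
  Nat.rec (fun s e => next 0 s e)
    (fun r ih s e => cond (next (Nat.succ r) s e) (ih (Nat.add s w) (Nat.add e c)) false) r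

theorem loopOk_zero (w c : ℕ) (next : ℕ → ℕ → ℕ → Bool) (s e : ℕ) :
    loopOk w c next 0 s e = next 0 s e := rfl

theorem loopOk_succ (w c : ℕ) (next : ℕ → ℕ → ℕ → Bool) (r s e : ℕ) :
    loopOk w c next (r + 1) s e =
      cond (next (r + 1) s e) (loopOk w c next r (s + w) (e + c)) false := rfl

/-- Search over all digit multisets of size at most `r`, with digits from `l`, and finally the
digit 1 (which does not affect the difference of sum and code modulo 9). -/
noncomputable def searchOk (l : List (ℕ × ℕ)) : ℕ → ℕ → ℕ → Bool :=
  List.rec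
    (fun r s e => cond (Nat.beq (Nat.mod s 9) (Nat.mod e 9))
      (loopOk 1 145 (fun _ s e => leafOk s e) r s e) true)
    (fun p _ ih => loopOk p.1 p.2 ih) l

theorem searchOk_nil (r s e : ℕ) : searchOk [] r s e =
    cond (Nat.beq (s % 9) (e % 9)) (loopOk 1 145 (fun _ s e => leafOk s e) r s e) true := rfl

theorem loopOk_spec (w c : ℕ) (next : ℕ → ℕ → ℕ → Bool) (r : ℕ) :
    ∀ s e, loopOk w c next r s e = true → ∀ j ≤ r,
      next (r - j) (s + j * w) (e + j * c) = true := by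
  induction r with
  | zero =>
    intro s e h j hj
    obtain rfl : j = 0 := by omega
    simpa [loopOk_zero] using h
  | succ r ih =>
    intro s e h j hj
    simp only [loopOk_succ, Bool.cond_false_right, Bool.and_eq_true] at h
    cases j with
    | zero => simpa using h.1
    | succ j =>
      have := ih _ _ h.2 j (by omega)
      rw [show r + 1 - (j + 1) = r - j by omega, show s + (j + 1) * w = s + w + j * w by ring,
        show e + (j + 1) * c = e + c + j * c by ring]
      exact this

theorem split_sum (f : ℕ → ℕ) (d : ℕ) (L : List ℕ) :
    (L.map f).sum = L.count d * f d + ((L.filter (fun x => x ≠ d)).map f).sum := by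
  induction L with
  | nil => simp
  | cons a L ih =>
    by_cases h : a = d
    · subst h; simp at ih ⊢; rw [ih]; ring
    · simp [h] at ih ⊢; rw [ih]; ring

theorem searchOk_spec (ds : List ℕ) :
    ∀ r s e, searchOk (ds.map fun d => (d ^ d, ecode d)) r s e = true →
      ∀ L : List ℕ, (∀ x ∈ L, x ∈ ds ∨ x = 1) → L.length ≤ r →
        (s + (L.map fun d => d ^ d).sum) % 9 = (e + (L.map ecode).sum) % 9 →
        leafOk (s + (L.map fun d => d ^ d).sum) (e + (L.map ecode).sum) = true := by
  induction ds with
  | nil =>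
    intro r s e h L hL hr hm
    obtain ⟨j, rfl⟩ : ∃ j, L = List.replicate j 1 :=
      ⟨L.length, List.eq_replicate_iff.2 ⟨rfl, fun x hx => by simpa using hL x hx⟩⟩
    simp only [List.length_replicate] at hr
    simp only [List.map_replicate, List.sum_replicate, smul_eq_mul, ecode] at hm ⊢
    norm_num at hm ⊢
    have hb : Nat.beq (s % 9) (e % 9) = true := by rw [Nat.beq_eq]; omega
    rw [List.map_nil, searchOk_nil, hb, cond_true] at h
    simpa using loopOk_spec _ _ _ r s e h j hr
  | cons d ds ih =>
    intro r s e h L hL hr hm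
    have hlen := split_sum (fun _ => 1) d L
    simp only [List.map_const', List.sum_replicate, smul_eq_mul, mul_one] at hlen
    have h1 := loopOk_spec _ _ _ r s e h (L.count d) (by omega)
    have h2 := ih _ _ _ h1 (L.filter (fun x => x ≠ d)) (by
      intro x hx
      simp only [ne_eq, decide_not, List.mem_filter, Bool.not_eq_eq_eq_not, Bool.not_true,
        decide_eq_false_iff_not] at hx
      have := hL x hx.1
      simp only [List.mem_cons] at this
      tauto) (by omega)
    rw [split_sum (fun d => d ^ d) d L, split_sum ecode d L, ← add_assoc, ← add_assoc] at hm ⊢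
    exact h2 hm

theorem encode_eq (f : ℕ) : ∀ n < 10 ^ f, encode f n = ((Nat.digits 10 n).map ecode).sum := by
  induction f with
  | zero => intro n hn; obtain rfl : n = 0 := by simpa using hn
            simp [encode]
  | succ f ih =>
    intro n hn
    rcases Nat.eq_zero_or_pos n with rfl | hp
    · simp [encode]
    · have hb : Nat.beq n 0 = false := by
        cases n with
        | zero => omega
        | succ n => rfl
      rw [Nat.digits_def' (by norm_num) hp, encode_succ, hb, ih (n / 10) (by rw [pow_succ] at hn; omega)]
      simp

theorem ecode_sum_mod (L : List ℕ) : (L.map ecode).sum % 9 = L.sum % 9 := by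
  induction L with
  | nil => rfl
  | cons a L ih => simp only [List.map_cons, List.sum_cons, ecode] at ih ⊢; omega

theorem search_true' : searchOk
    [(387420489, 618475290633), (16777216, 38654705672), (823543, 2415919111),
      (46656, 150994950), (3125, 9437189), (256, 589828), (27, 36867), (4, 2306), (1, 9)]
    10 0 0 = true := by
  decide +kernel

theorem search_true : searchOk ([9, 8, 7, 6, 5, 4, 3, 2, 0].map fun d => (d ^ d, ecode d))
    10 0 0 = true := by
  have h : ([9, 8, 7, 6, 5, 4, 3, 2, 0].map fun d => (d ^ d, ecode d)) =
    [(387420489, 618475290633), (16777216, 38654705672), (823543, 2415919111),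
      (46656, 150994950), (3125, 9437189), (256, 589828), (27, 36867), (4, 2306), (1, 9)] := by
    decide +kernel
  rw [h]
  exact search_true'

theorem sum_le_aux (L : List ℕ) (h : ∀ x ∈ L, x < 10) :
    (L.map fun c => c ^ c).sum ≤ L.length * 387420489 := by
  induction L with
  | nil => simp
  | cons a L ih =>
    have h1 := ih (fun x hx => h x (List.mem_cons_of_mem _ hx))
    have ha : a < 10 := h a List.mem_cons_self
    have h2 : a ^ a ≤ 387420489 := by interval_cases a <;> norm_num
    simp only [List.map_cons, List.sum_cons, List.length_cons]
    omega

theorem pow_aux (k : ℕ) : (k + 11) * 387420489 < 10 ^ (k + 10) := by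
  induction k with
  | zero => norm_num
  | succ k ih =>
    rw [show k + 1 + 10 = (k + 10) + 1 by ring, pow_succ]
    linarith

theorem munchausen_base10 (n : ℕ) (hn : 1 ≤ n) :
    n = P 10 n ↔ n = 1 ∨ n = 3435 := by
  constructor
  · intro h
    have hd : ∀ x ∈ Nat.digits 10 n, x < 10 := fun x hx => Nat.digits_lt_base (by norm_num) hx
    have hle := sum_le_aux _ hd
    have hlen : (Nat.digits 10 n).length ≤ 10 := by
      by_contra hc
      obtain ⟨k, hk⟩ : ∃ k, (Nat.digits 10 n).length = k + 11 :=
        ⟨(Nat.digits 10 n).length - 11, by omega⟩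
      have h1 := Nat.base_pow_length_digits_le 10 n (by norm_num) (by omega)
      have h2 := pow_aux k
      rw [hk, pow_succ] at h1
      rw [hk] at hle
      unfold P at h
      omega
    have hlt : n < 10 ^ 10 := by
      have := (Nat.digits_length_le_iff (b := 10) (by norm_num) (k := 10) n).1 hlen
      exact this
    have hs := searchOk_spec _ _ _ _ search_true (Nat.digits 10 n) (by
      intro x hx
      have := hd x hx
      interval_cases x <;> simp) hlen
    have hmod : n % 9 = ((Nat.digits 10 n).map ecode).sum % 9 := by
      rw [ecode_sum_mod]; exact Nat.modEq_nine_digits_sum n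
    unfold P at h
    rw [← h, zero_add, zero_add] at hs
    replace hs := hs hmod
    rw [leafOk, encode_eq 10 n hlt] at hs
    simp only [Nat.beq_refl, cond_true, Bool.or_eq_true, Nat.ble_eq,
      Nat.beq_eq] at hs
    omega
  · rintro (rfl | rfl) <;> simp [P]
end

section
/- The positive Munchausen numbers in base 2 are exactly 1 and 2; that is, for n ≥ 1, n = P_2(n) if and only if n = 1 or n = 2. -/
theorem P_two_step (n : ℕ) (hn : 1 ≤ n) : P 2 n = 1 + P 2 (n / 2) := by
  unfold P
  rw [Nat.digits_def' (by norm_num) hn]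
  rcases Nat.mod_two_eq_zero_or_one n with h | h <;> simp [h]

theorem P_two_le (n : ℕ) : P 2 n ≤ n := by
  induction n using Nat.strong_induction_on with
  | _ n ih =>
    rcases Nat.eq_zero_or_pos n with h | h
    · subst h; simp [P]
    · have h1 := P_two_step n h
      have h2 := ih (n / 2) (by omega)
      omega

theorem munchausen_base2 (n : ℕ) (hn : 1 ≤ n) :
    n = P 2 n ↔ n = 1 ∨ n = 2 := by
  constructor
  · intro h
    have h1 := P_two_step n hn
    have h2 := P_two_le (n / 2)
    omega
  · rintro (rfl | rfl) <;> simp [P]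
end

section
/- The positive Munchausen numbers in base 3 are exactly 1, 5 and 8; that is, for n ≥ 1, n = P_3(n) if and only if n ∈ {1, 5, 8}. -/
theorem P_step (n : ℕ) (hn : 0 < n) : P 3 n = (n % 3) ^ (n % 3) + P 3 (n / 3) := by
  unfold P
  rw [Nat.digits_def' (by norm_num) hn]
  simp

theorem P_lt (n : ℕ) : 9 ≤ n → P 3 n < n := by
  induction n using Nat.strong_induction_on with
  | _ n ih =>
    intro h
    by_cases h27 : n < 27
    · interval_cases n <;> simp [P]
    · have h1 := ih (n / 3) (by omega) (by omega)
      rw [P_step n (by omega)]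
      have h2 : (n % 3) ^ (n % 3) ≤ 4 := by
        have : n % 3 < 3 := Nat.mod_lt _ (by norm_num)
        interval_cases n % 3 <;> norm_num
      omega

theorem munchausen_base3 (n : ℕ) (hn : 1 ≤ n) :
    n = P 3 n ↔ n ∈ ({1, 5, 8} : Set ℕ) := by
  by_cases h : 9 ≤ n
  · have := P_lt n h
    simp only [Set.mem_insert_iff, Set.mem_singleton_iff]
    omega
  · interval_cases n <;> simp [P]
end

section
/- The only positive Munchausen number in base 5 is 1; that is, for n ≥ 1, n = P_5(n) if and only if n = 1. -/
lemma P_zero : P 5 0 = 0 := by simp [P]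

lemma P_rec (n : ℕ) (hn : n ≠ 0) : P 5 n = (n % 5) ^ (n % 5) + P 5 (n / 5) := by
  unfold P
  rw [Nat.digits_def' (by norm_num) (Nat.pos_of_ne_zero hn)]
  simp

/-- Fuel-based evaluation of `P 5`. -/
def Q : ℕ → ℕ → ℕ
  | 0, _ => 0
  | k + 1, n => if n = 0 then 0 else (n % 5) ^ (n % 5) + Q k (n / 5)

lemma P_eq_Q (k : ℕ) : ∀ n, n < 5 ^ k → P 5 n = Q k n := by
  induction k with
  | zero =>
    intro n hn
    have : n = 0 := by simpa using hn
    subst this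
    simp [P_zero, Q]
  | succ k ih =>
    intro n hn
    by_cases h : n = 0
    · subst h; simp [P_zero, Q]
    · rw [P_rec n h, Q, if_neg h, ih (n / 5)]
      rw [pow_succ] at hn
      omega

lemma digit_pow_le (n : ℕ) : (n % 5) ^ (n % 5) ≤ 256 := by
  have h : n % 5 < 5 := Nat.mod_lt _ (by norm_num)
  generalize n % 5 = c at h
  interval_cases c <;> norm_num

set_option maxRecDepth 100000 in
lemma Q_small : ∀ n < 400, Q 5 n ≤ n + 1280 := by decide +kernel

set_option maxRecDepth 100000 in
lemma Q_fixed : ∀ n < 2000, n = Q 5 n → n = 0 ∨ n = 1 := by decide +kernel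

lemma P_le (n : ℕ) : P 5 n ≤ n + 1280 := by
  induction n using Nat.strong_induction_on with
  | _ n ih =>
    by_cases h : n < 400
    · rw [P_eq_Q 5 n (by omega)]
      exact Q_small n h
    · rw [P_rec n (by omega)]
      have h1 := ih (n / 5) (by omega)
      have h2 := digit_pow_le n
      omega

theorem munchausen_base5 (n : ℕ) (hn : 1 ≤ n) :
    n = P 5 n ↔ n = 1 := by
  constructor
  · intro h
    by_cases h2 : n < 2000
    · rw [P_eq_Q 5 n (by omega)] at h
      have := Q_fixed n h2 h
      omega
    · rw [P_rec n (by omega)] at h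
      have h1 := P_le (n / 5)
      have h3 := digit_pow_le n
      omega
  · rintro rfl
    simp [P]
end

section
/- The positive Munchausen numbers in base 7 are exactly 1 and 3665; that is, for n ≥ 1, n = P_7(n) if and only if n ∈ {1, 3665}. -/
/-- A sum of digit powers is determined by the number of digits and the counts of digits `2..6`. -/
theorem sum_counts (l : List ℕ) (h : ∀ d ∈ l, d < 7) :
    ∃ a b c d e : ℕ, a + b + c + d + e ≤ l.length ∧
      (l.map (fun c => c ^ c)).sum
        = l.length + 3 * a + 26 * b + 255 * c + 3124 * d + 46655 * e := by
  induction l with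
  | nil => exact ⟨0, 0, 0, 0, 0, by simp, by simp⟩
  | cons x l ih =>
    obtain ⟨a, b, c, d, e, h1, h2⟩ := ih (fun d hd => h d (List.mem_cons_of_mem _ hd))
    have hx : x < 7 := h x List.mem_cons_self
    simp only [List.map_cons, List.sum_cons, List.length_cons, h2]
    interval_cases x
    · exact ⟨a, b, c, d, e, by omega, by norm_num; omega⟩
    · exact ⟨a, b, c, d, e, by omega, by norm_num; omega⟩
    · exact ⟨a + 1, b, c, d, e, by omega, by norm_num; omega⟩
    · exact ⟨a, b + 1, c, d, e, by omega, by norm_num; omega⟩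
    · exact ⟨a, b, c + 1, d, e, by omega, by norm_num; omega⟩
    · exact ⟨a, b, c, d + 1, e, by omega, by norm_num; omega⟩
    · exact ⟨a, b, c, d, e + 1, by omega, by norm_num; omega⟩

/-- Digit power sum with explicit fuel. -/
def fuelP : ℕ → ℕ → ℕ
  | 0, _ => 0
  | k + 1, n => if n = 0 then 0 else (n % 7) ^ (n % 7) + fuelP k (n / 7)

theorem fuelP_eq (k n : ℕ) (h : (Nat.digits 7 n).length ≤ k) : fuelP k n = P 7 n := by
  induction k generalizing n with
  | zero =>
    have : Nat.digits 7 n = [] := List.length_eq_zero_iff.mp (by omega)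
    simp [fuelP, P, this]
  | succ k ih =>
    unfold fuelP
    split_ifs with h0
    · simp [h0, P]
    · have hd := Nat.digits_def' (b := 7) (by norm_num) (Nat.pos_of_ne_zero h0)
      rw [hd, List.length_cons] at h
      rw [ih _ (by omega)]
      simp only [P, hd, List.map_cons, List.sum_cons]

/-- Boolean test: a fixed point of `fuelP 7` is one of the expected values. -/
def good (n : ℕ) : Bool :=
  !(fuelP 7 n == n) || (n == 0 || (n == 1 || n == 3665))

set_option synthInstance.maxHeartbeats 400000 in
set_option synthInstance.maxSize 4096 in
theorem finite_check : ∀ m < 8, ∀ e < m + 1, ∀ d < m + 1 - e, ∀ c < m + 1 - e - d,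
    ∀ b < m + 1 - e - d - c, ∀ a < m + 1 - e - d - c - b,
    good (m + 3 * a + 26 * b + 255 * c + 3124 * d + 46655 * e) = true := by
  decide +kernel

theorem pow_bound (k : ℕ) : 46656 * (k + 8) < 7 ^ (k + 7) := by
  induction k with
  | zero => norm_num
  | succ k ih => rw [show k + 1 + 7 = (k + 7) + 1 by ring, pow_succ]; omega

theorem munchausen_base7 (n : ℕ) (hn : 1 ≤ n) :
    n = P 7 n ↔ n ∈ ({1, 3665} : Set ℕ) := by
  constructor
  · intro h
    obtain ⟨a, b, c, d, e, h1, h2⟩ :=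
      sum_counts (Nat.digits 7 n) (fun d hd => Nat.digits_lt_base (by norm_num) hd)
    have hP : P 7 n = _ := h2
    have hlen : (Nat.digits 7 n).length < 8 := by
      by_contra hc
      obtain ⟨k, hk⟩ := Nat.exists_eq_add_of_le (not_lt.mp hc)
      have hb := pow_bound k
      have hle : 7 ^ (k + 7) ≤ n := by
        rw [← Nat.lt_digits_length_iff (by norm_num)]
        omega
      omega
    have hf := fuelP_eq 7 n (by omega)
    have hn' := h.trans hP
    generalize (Nat.digits 7 n).length = m at *
    have key := finite_check m hlen e (by omega) d (by omega) c (by omega) b (by omega) a (by omega)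
    rw [← hn'] at key
    simp [good, hf.trans h.symm] at key
    simp only [Set.mem_insert_iff, Set.mem_singleton_iff]
    omega
  · rintro (rfl | rfl) <;> norm_num [P]
end

section
/- The only positive Munchausen number in base 8 is 1; that is, for n ≥ 1, n = P_8(n) if and only if n = 1. -/
/-- Digit power sum in base 8, computed with fuel. -/
def S8 : ℕ → ℕ → ℕ
  | 0, _ => 0
  | k + 1, n => if n = 0 then 0 else (n % 8) ^ (n % 8) + S8 k (n / 8)

theorem S8_eq (k : ℕ) : ∀ n, n < 8 ^ k → P 8 n = S8 k n := by
  induction k with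
  | zero => intro n h; have : n = 0 := by simpa using h
            subst this; simp [P, S8]
  | succ k ih =>
    intro n h
    by_cases h0 : n = 0
    · subst h0; simp [P, S8]
    · have h1 : n / 8 < 8 ^ k := by rw [pow_succ] at h; omega
      have h2 := ih _ h1
      simp only [S8, h0, if_false, ← h2, P]
      rw [Nat.digits_def' (by norm_num) (by omega)]
      simp

/-- The digit power sum only depends on the number of digits of each kind. -/
theorem counts (l : List ℕ) (h : ∀ c ∈ l, c < 8) :
    ∃ a b c d e f g : ℕ, a + b + c + d + e + f + g = l.length ∧
      (l.map (fun c => c ^ c)).sum =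
        a * 823543 + b * 46656 + c * 3125 + d * 256 + e * 27 + f * 4 + g := by
  induction l with
  | nil => exact ⟨0, 0, 0, 0, 0, 0, 0, by simp⟩
  | cons x l ih =>
    obtain ⟨a, b, c, d, e, f, g, h1, h2⟩ := ih (fun c hc => h c (by simp [hc]))
    have hx := h x (by simp)
    simp only [List.map_cons, List.sum_cons, List.length_cons, h2, ← h1]
    interval_cases x
    · exact ⟨a, b, c, d, e, f, g + 1, by omega, by omega⟩
    · exact ⟨a, b, c, d, e, f, g + 1, by omega, by omega⟩
    · exact ⟨a, b, c, d, e, f + 1, g, by omega, by omega⟩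
    · exact ⟨a, b, c, d, e + 1, f, g, by omega, by omega⟩
    · exact ⟨a, b, c, d + 1, e, f, g, by omega, by omega⟩
    · exact ⟨a, b, c + 1, d, e, f, g, by omega, by omega⟩
    · exact ⟨a, b + 1, c, d, e, f, g, by omega, by omega⟩
    · exact ⟨a + 1, b, c, d, e, f, g, by omega, by omega⟩

set_option synthInstance.maxHeartbeats 400000 in
set_option synthInstance.maxSize 2000 in
theorem search : ∀ a < 9, ∀ b < 9 - a, ∀ c < 9 - a - b, ∀ d < 9 - a - b - c,
    ∀ e < 9 - a - b - c - d, ∀ f < 9 - a - b - c - d - e, ∀ g < 9 - a - b - c - d - e - f,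
    S8 8 (a * 823543 + b * 46656 + c * 3125 + d * 256 + e * 27 + f * 4 + g) =
      a * 823543 + b * 46656 + c * 3125 + d * 256 + e * 27 + f * 4 + g →
    a * 823543 + b * 46656 + c * 3125 + d * 256 + e * 27 + f * 4 + g ≤ 1 := by
  decide +kernel

theorem growth (m : ℕ) : (m + 9) * 823543 < 8 ^ (m + 8) := by
  induction m with
  | zero => norm_num
  | succ m ih =>
              rw [show m + 1 + 8 = (m + 8) + 1 by ring, pow_succ]
              generalize 8 ^ (m + 8) = x at *
              linarith

theorem munchausen_base8 (n : ℕ) (hn : 1 ≤ n) :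
    n = P 8 n ↔ n = 1 := by
  constructor
  · intro h
    obtain ⟨a, b, c, d, e, f, g, h1, h2⟩ := counts (Nat.digits 8 n)
      (fun c hc => Nat.digits_lt_base (by norm_num) hc)
    change P 8 n = _ at h2
    have hlen : (Nat.digits 8 n).length ≤ 8 := by
      by_contra hc
      obtain ⟨m, hm⟩ : ∃ m, (Nat.digits 8 n).length = m + 9 :=
        ⟨(Nat.digits 8 n).length - 9, by omega⟩
      have h3 := growth m
      have h4 : 8 ^ (m + 8) ≤ n := by
        rw [← Nat.lt_digits_length_iff (by norm_num), hm]; omega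
      generalize 8 ^ (m + 8) = x at *
      omega
    have hlt : n < 8 ^ 8 := (Nat.digits_length_le_iff (by norm_num) n).1 hlen
    have hS := S8_eq 8 n hlt
    have := search a (by omega) b (by omega) c (by omega) d (by omega) e (by omega)
      f (by omega) g (by omega) (by rw [← h2, ← h, ← hS, ← h])
    omega
  · rintro rfl
    simp [P]
end
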